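/- The polynomial loops in S¹ are not dense in the continuous loop group of S¹: the set of continuous maps f : S¹ → S¹ for which there exists a finitely supported a : ℤ → ℂ with f(z) = Σ_k a_k z^k for all z ∈ S¹ is not dense in the space C(S¹, S¹) of all continuous maps from the circle to itself, with the topology of uniform convergence. -/

import Mathlib

/-!
A polynomial loop is a Laurent polynomial `p` with `p * q = 1` on the circle, where `q` is the
Laurent polynomial obtained by conjugating the coefficients and replacing `T` by `T⁻¹`. The circle
is infinite, so `p * q = 1` holds between Laurent polynomials; units of the Laurent polynomial ring
over a field are monomials, so `f z = f 1 * z ^ n` for some `n : ℤ`. In particular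
`f (-1) ^ 2 = f 1 ^ 2`, a closed condition on `f` that the null-homotopic loop
`z ↦ exp (i π (1 + re z) / 4)` violates.
-/

open AddMonoidAlgebra LaurentPolynomial

-- If the supports of `p` and `q` were not both singletons, two different monomials would survive
-- in `p * q`.
lemma exists_eq_single_of_mul_eq_single {R A : Type*} [Semiring R] [NoZeroDivisors R] [Add A]
    [TwoUniqueSums A] {p q : R[A]} {m : A} {r : R} (hr : r ≠ 0) (h : p * q = single m r) :
    ∃ n c, p = single n c := by
  have hpq : p * q ≠ 0 := h ▸ single_ne_zero.mpr hr
  have hq : q.coeff.support.Nonempty := by simpa using right_ne_zero_of_mul hpq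
  have add_eq_of_unique {a b : A} (ha : a ∈ p.coeff.support) (hb : b ∈ q.coeff.support)
      (hab : UniqueAdd p.coeff.support q.coeff.support a b) : a + b = m := by
    have hne : (p * q).coeff (a + b) ≠ 0 := by
      rw [coeff_mul_add_of_uniqueAdd hab]
      exact mul_ne_zero (Finsupp.mem_support_iff.mp ha) (Finsupp.mem_support_iff.mp hb)
    contrapose! hne
    rw [h, coeff_single, Finsupp.single_eq_of_ne hne]
  have hcard : p.coeff.support.card * q.coeff.support.card ≤ 1 := by
    by_contra! hlt
    obtain ⟨⟨a, b⟩, hab, ⟨a', b'⟩, hab', hne, hu, hu'⟩ :=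
      TwoUniqueSums.uniqueAdd_of_one_lt_card hlt
    rw [Finset.mem_product] at hab hab'
    have hsum : a' + b' = a + b :=
      (add_eq_of_unique hab'.1 hab'.2 hu').trans (add_eq_of_unique hab.1 hab.2 hu).symm
    obtain ⟨rfl, rfl⟩ := hu hab'.1 hab'.2 hsum
    exact hne rfl
  have hp_card : p.coeff.support.card ≤ 1 :=
    (Nat.le_mul_of_pos_right _ hq.card_pos).trans hcard
  have : Nonempty A := ⟨m⟩
  obtain ⟨n, c, hc⟩ := Finsupp.card_support_le_one'.mp hp_card
  exact ⟨n, c, AddMonoidAlgebra.ext hc⟩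

section Laurent

lemma laurent_eval₂_eq_sum {R S : Type*} [CommSemiring R] [CommSemiring S] (f : R →+* S) (x : Sˣ)
    (p : R[T;T⁻¹]) : eval₂ f x p = p.coeff.sum fun n c ↦ f c * ↑(x ^ n) := by
  induction p using LaurentPolynomial.induction_on' with
  | add p q hp hq =>
    rw [map_add, hp, hq, coeff_add, Finsupp.sum_add_index' (by simp) (by simp [add_mul])]
  | C_mul_T n c =>
    rw [eval₂_C_mul_T, ← single_eq_C_mul_T, coeff_single, Finsupp.sum_single_index (by simp)]

lemma eq_of_infinite_eval₂_id_eq {R : Type*} [CommRing R] [IsDomain R] {p q : R[T;T⁻¹]}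
    (h : {x : Rˣ | eval₂ (.id R) x p = eval₂ (.id R) x q}.Infinite) : p = q := by
  obtain ⟨n, P, hP⟩ := exists_T_pow (p - q)
  have hP_zero : P = 0 := by
    refine Polynomial.eq_zero_of_infinite_isRoot P ((h.image Units.val_injective.injOn).mono ?_)
    rintro _ ⟨x, hx, rfl⟩
    have := congrArg (eval₂ (.id R) x) hP
    rw [eval₂_toLaurent, map_mul, map_sub, sub_eq_zero.mpr hx, zero_mul] at this
    exact this
  rw [hP_zero, map_zero, eq_comm, (isUnit_T n).mul_left_eq_zero] at hP
  exact sub_eq_zero.mp hP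

variable {R : Type*} [CommSemiring R] [StarRing R]

/-- The conjugate reciprocal `∑ star (aₙ) T⁻ⁿ` of a Laurent polynomial `∑ aₙ Tⁿ`, whose values at
unitary elements are the conjugates of those of the original. -/
noncomputable def conjReciprocal : R[T;T⁻¹] →+* R[T;T⁻¹] :=
  (invert : R[T;T⁻¹] ≃ₐ[R] R[T;T⁻¹]).toRingHom.comp (mapRingHom ℤ (starRingEnd R))

lemma conjReciprocal_C_mul_T (c : R) (n : ℤ) :
    conjReciprocal (C c * T n) = C (star c) * T (-n) := by
  have hmap : mapRingHom ℤ (starRingEnd R) (C c * T n) = C (star c) * T n := by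
    rw [← single_eq_C_mul_T, mapRingHom_single, starRingEnd_apply, single_eq_C_mul_T]
  change invert (mapRingHom ℤ (starRingEnd R) (C c * T n)) = _
  rw [hmap, map_mul, invert_C, invert_T]

lemma eval₂_conjReciprocal {x : Rˣ} (hx : star x = x⁻¹) (p : R[T;T⁻¹]) :
    eval₂ (.id R) x (conjReciprocal p) = star (eval₂ (.id R) x p) := by
  induction p using LaurentPolynomial.induction_on' with
  | add p q hp hq => simp only [map_add, star_add, hp, hq]
  | C_mul_T n c =>
    rw [conjReciprocal_C_mul_T, eval₂_C_mul_T, eval₂_C_mul_T, star_mul', ← Units.coe_star,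
      star_zpow, hx, inv_zpow']
    rfl

end Laurent

lemma star_circle_toUnits (z : Circle) : star (Circle.toUnits z) = (Circle.toUnits z)⁻¹ :=
  Units.ext (Circle.coe_inv_eq_conj z).symm

lemma mul_conjReciprocal_eq_one_of_infinite_norm_eq_one {p : ℂ[T;T⁻¹]}
    (hp : {z : Circle | ‖eval₂ (.id ℂ) z.toUnits p‖ = 1}.Infinite) :
    p * conjReciprocal p = 1 := by
  have hinj : Function.Injective Circle.toUnits := fun z w h ↦
    Circle.ext (congrArg Units.val h)
  refine eq_of_infinite_eval₂_id_eq ((hp.image hinj.injOn).mono ?_)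
  rintro _ ⟨z, hz : ‖_‖ = 1, rfl⟩
  change eval₂ _ _ _ = eval₂ _ _ _
  rw [map_mul, map_one, eval₂_conjReciprocal (star_circle_toUnits z), Complex.star_def,
    Complex.mul_conj', hz]
  simp

lemma exists_eq_mul_zpow_of_eq_laurent_sum {f : Circle → Circle} {a : ℤ →₀ ℂ}
    (hf : ∀ z : Circle, (f z : ℂ) = a.sum fun k c ↦ c * (z : ℂ) ^ k) :
    ∃ n : ℤ, ∀ z, f z = f 1 * z ^ n := by
  have heval (z : Circle) : eval₂ (.id ℂ) z.toUnits (.ofCoeff a) = f z := by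
    simp [laurent_eval₂_eq_sum, hf]
  have : Nontrivial Circle := ⟨-1, 1, Circle.neg_ne_self 1⟩
  have : Infinite Circle := PreconnectedSpace.infinite
  have hunit : AddMonoidAlgebra.ofCoeff a * conjReciprocal (.ofCoeff a) = 1 :=
    mul_conjReciprocal_eq_one_of_infinite_norm_eq_one (by
      simpa only [heval, Circle.norm_coe, Set.ofPred_true] using Set.infinite_univ)
  obtain ⟨n, c, hc⟩ := exists_eq_single_of_mul_eq_single one_ne_zero hunit
  have hmonomial (z : Circle) : (f z : ℂ) = c * (z : ℂ) ^ n := by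
    rw [← heval, hc, single_eq_C_mul_T, eval₂_C_mul_T]
    simp
  refine ⟨n, fun z ↦ Circle.ext ?_⟩
  simp [hmonomial]

lemma sq_apply_neg_one_eq_of_eq_mul_zpow {G : Type*} [CommGroup G] [HasDistribNeg G] {f : G → G}
    {n : ℤ} (hf : ∀ z, f z = f 1 * z ^ n) : f (-1) ^ 2 = f 1 ^ 2 := by
  have hsign : ((-1 : G) ^ n) ^ 2 = 1 := by
    rw [← zpow_natCast, zpow_comm, zpow_natCast, neg_one_sq, one_zpow]
  rw [hf (-1), mul_pow, hsign, mul_one]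

lemma exists_sq_apply_neg_one_ne : ∃ g : C(Circle, Circle), g (-1) ^ 2 ≠ g 1 ^ 2 := by
  let g : C(Circle, Circle) := ⟨fun z ↦ Circle.exp (Real.pi / 4 * (1 + (z : ℂ).re)), by fun_prop⟩
  have hg_neg_one : g (-1) = 1 := by simp [g]
  have hg_one : g 1 ^ 2 = Circle.exp Real.pi := by
    rw [ContinuousMap.coe_mk, ← Circle.exp_natCast_mul, Circle.coe_one, Complex.one_re]
    congr 1
    push_cast
    ring
  refine ⟨g, ?_⟩
  rw [hg_neg_one, hg_one, one_pow]
  exact Circle.exp_pi_ne_one.symm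

/-- The polynomial loops (restrictions to the circle of Laurent polynomials) are not dense
in the continuous loop group `C(S¹, S¹)` of the circle group, with the compact-open
topology (= uniform convergence). -/
theorem polynomial_loops_not_dense_in_loopGroup_circle :
    ¬ Dense {f : C(Circle, Circle) | ∃ a : ℤ →₀ ℂ,
        ∀ z : Circle, (f z : ℂ) = a.sum fun k c => c * (z : ℂ) ^ k} := by
  intro hdense
  have hclosed : IsClosed {f : C(Circle, Circle) | f (-1) ^ 2 = f 1 ^ 2} :=
    isClosed_eq (by fun_prop) (by fun_prop)
  obtain ⟨g, hg⟩ := exists_sq_apply_neg_one_ne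
  refine hg (closure_minimal ?_ hclosed (hdense g))
  rintro f ⟨a, hf⟩
  obtain ⟨n, hn⟩ := exists_eq_mul_zpow_of_eq_laurent_sum hf
  exact sq_apply_neg_one_eq_of_eq_mul_zpow hn
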